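/- Let ν > 1, 1 < p < ν, S ≥ 0 and λ ≥ 0 be real numbers, and let u : ℕ → ℝ be a sequence of nonnegative reals such that for every k ∈ ℕ, u(k+1) ≤ ( 1 + S·(ν/p)^k·√λ / √( 2(ν/p)^k − 1 ) )^{(p/ν)^k} · u(k). Then for every k ∈ ℕ, u(k) ≤ exp( S·√(λν) / (√ν − √p) ) · u(0). -/

import Mathlib

/-!
Since `1 + x ≤ exp x`, a factor `(1 + x) ^ q` is at most `exp (x * q)`. With `t = (ν/p)^k ≥ 1` and
`q = t⁻¹`, the exponent is `S √λ / √(2t - 1)`, which is at most `S √λ / √t = S √λ (√p/√ν)^k` because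
`2t - 1 ≥ t` (`moser_factor_le`). The exponents are therefore dominated by a geometric series of
ratio `√p/√ν < 1`, whose sum is `√ν/(√ν - √p)`.
-/

open Real

/-- One iteration factor, with `t` in the role of `(ν/p)^k` and `c` in the role of `√λ`. -/
lemma moser_factor_le {S c t : ℝ} (hS : 0 ≤ S) (hc : 0 ≤ c) (ht : 1 ≤ t) :
    (1 + S * t * c / √(2 * t - 1)) ^ t⁻¹ ≤ exp (S * c * √t⁻¹) := by
  have ht0 : 0 < t := by linarith
  have hx : 0 ≤ S * t * c / √(2 * t - 1) := by positivity
  calc (1 + S * t * c / √(2 * t - 1)) ^ t⁻¹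
      ≤ exp (S * t * c / √(2 * t - 1)) ^ t⁻¹ := by
        refine rpow_le_rpow (by linarith) ?_ (by positivity)
        linarith [add_one_le_exp (S * t * c / √(2 * t - 1))]
    _ = exp (S * c / √(2 * t - 1)) := by
        rw [← exp_mul]
        congr 1
        field_simp
    _ ≤ exp (S * c * √t⁻¹) := by
        rw [exp_le_exp, sqrt_inv, ← div_eq_mul_inv]
        have h : √t ≤ √(2 * t - 1) := sqrt_le_sqrt (by linarith)
        have h0 : 0 < √t := sqrt_pos.2 ht0
        gcongr

/-- Abstract iteration step of the Moser iteration: a nonnegative sequence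
satisfying `u (k+1) ≤ (1 + S (ν/p)^k √λ / √(2(ν/p)^k - 1))^{(p/ν)^k} * u k`
is bounded by `exp (S √(λν)/(√ν - √p)) * u 0`. -/
theorem moser_iteration_sequence
    (ν p S lam : ℝ) (hν : 1 < ν) (hp1 : 1 < p) (hpν : p < ν)
    (hS : 0 ≤ S) (hlam : 0 ≤ lam)
    (u : ℕ → ℝ) (hu_nonneg : ∀ k, 0 ≤ u k)
    (hrec : ∀ k : ℕ,
      u (k + 1) ≤
        (1 + S * (ν / p) ^ k * Real.sqrt lam / Real.sqrt (2 * (ν / p) ^ k - 1)) ^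
            ((p / ν) ^ k) * u k) :
    ∀ k : ℕ, u k ≤ Real.exp (S * Real.sqrt (lam * ν) / (Real.sqrt ν - Real.sqrt p)) * u 0 := by
  have hp0 : 0 < p := by linarith
  have hν0 : 0 < ν := by linarith
  have hsp : 0 < √p := sqrt_pos.2 hp0
  have hsν : 0 < √ν := sqrt_pos.2 hν0
  have hlt : √p < √ν := sqrt_lt_sqrt hp0.le hpν
  set r : ℝ := √p / √ν with hr
  have hr0 : 0 ≤ r := by positivity
  have hr1 : r < 1 := (div_lt_one hsν).2 hlt
  have hinv (k : ℕ) : ((ν / p) ^ k)⁻¹ = (p / ν) ^ k := by rw [← inv_pow, inv_div]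
  have hsqrt (k : ℕ) : √((p / ν) ^ k) = r ^ k := by
    rw [hr, ← sqrt_div hp0.le, sqrt_eq_iff_mul_self_eq (by positivity) (by positivity),
      ← mul_pow, mul_self_sqrt (by positivity)]
  have hfac (k : ℕ) : u (k + 1) ≤ exp (S * √lam * r ^ k) * u k := by
    refine (hrec k).trans (mul_le_mul_of_nonneg_right ?_ (hu_nonneg k))
    have h := moser_factor_le hS (sqrt_nonneg lam)
      (one_le_pow₀ ((one_le_div hp0).2 hpν.le) : 1 ≤ (ν / p) ^ k)
    rwa [hinv, hsqrt] at h
  have hpartial (k : ℕ) : u k ≤ exp (S * √lam * ∑ i ∈ Finset.range k, r ^ i) * u 0 := by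
    induction k with
    | zero => simp
    | succ k ih =>
      refine (hfac k).trans ((mul_le_mul_of_nonneg_left ih (exp_pos _).le).trans_eq ?_)
      rw [Finset.sum_range_succ, mul_add, exp_add]
      ring
  intro k
  refine (hpartial k).trans (mul_le_mul_of_nonneg_right (exp_le_exp.2 ?_) (hu_nonneg 0))
  have hsum : ∑ i ∈ Finset.range k, r ^ i ≤ (1 - r)⁻¹ := by
    rw [← tsum_geometric_of_lt_one hr0 hr1]
    exact (summable_geometric_of_lt_one hr0 hr1).sum_le_tsum _ fun i _ => pow_nonneg hr0 i
  have hval : (1 - r)⁻¹ = √ν / (√ν - √p) := by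
    rw [hr, one_sub_div hsν.ne', inv_div]
  calc S * √lam * ∑ i ∈ Finset.range k, r ^ i
      ≤ S * √lam * (1 - r)⁻¹ := by gcongr
    _ = S * √(lam * ν) / (√ν - √p) := by
        rw [hval, sqrt_mul hlam]
        ring
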